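/- Let f : ℝ → ℝ be continuous on an open interval (a, b) and specularly differentiable at every point of (a, b), and suppose there is a constant M > 0 with |f^S(x)| ≤ M for all x ∈ (a, b). Then for all x₁, x₂ ∈ (a, b), |f(x₁) − f(x₂)| ≤ M·|x₁ − x₂|. -/

import Mathlib

open Filter Topology Set

/-- The combination function `A(α,β)` from the paper: the slope of the specular
tangent determined by one-sided slopes `α` (right) and `β` (left). -/
noncomputable def specA (α β : ℝ) : ℝ :=
  if α + β = 0 then 0
  else (α * β - 1 + Real.sqrt ((α ^ 2 + 1) * (β ^ 2 + 1))) / (α + β)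

/-- `HasSpecData f x₀ L α β` means: the left and right limits of `f` at `x₀` both
exist and are equal to `L`, the right specular derivative of `f` at `x₀` is `α`,
and the left specular derivative of `f` at `x₀` is `β`. -/
def HasSpecData (f : ℝ → ℝ) (x₀ L α β : ℝ) : Prop :=
  Tendsto f (𝓝[<] x₀) (𝓝 L) ∧ Tendsto f (𝓝[>] x₀) (𝓝 L) ∧
    Tendsto (fun x => (f x - L) / (x - x₀)) (𝓝[>] x₀) (𝓝 α) ∧
    Tendsto (fun x => (f x - L) / (x - x₀)) (𝓝[<] x₀) (𝓝 β)

/-- `f` is specularly differentiable at `x₀`. -/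
def SpecDifferentiableAt (f : ℝ → ℝ) (x₀ : ℝ) : Prop :=
  ∃ L α β, HasSpecData f x₀ L α β

/-- `f` is specularly differentiable at `x₀` with specular derivative `d`. -/
def HasSpecDerivAt (f : ℝ → ℝ) (x₀ d : ℝ) : Prop :=
  ∃ L α β, HasSpecData f x₀ L α β ∧ d = specA α β

/-!
The specular derivative is the tangent of the mean of the two one-sided slope angles, so it lies
between the one-sided slopes. Suppose it is at most `M` and let `M < c`. If `f x - c * x` took a
larger value at the right end of an interval than at the left end, then every intermediate value
would be attained for the last time at some point. There the right slope is at least `c`, hence the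
left slope is below `c`, and the point is a strict local minimum. But a real function has only
countably many values at strict local minima. Letting `c` decrease to `M` bounds the increments of
`f` from above; applying this to `-f` bounds them from below.
-/

theorem countable_setOf_strictLocalMin {X Y : Type*} [TopologicalSpace X]
    [SecondCountableTopology X] [Preorder Y] (h : X → Y) :
    {p : X | ∀ᶠ x in 𝓝[≠] p, h p < h x}.Countable := by
  let B := TopologicalSpace.countableBasis X
  let minimizers (U : Set X) : Set X := {p ∈ U | ∀ x ∈ U, x ≠ p → h p < h x}
  have subsingleton_minimizers (U : Set X) : (minimizers U).Subsingleton := by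
    rintro p ⟨hpU, hp⟩ q ⟨hqU, hq⟩
    by_contra hpq
    exact lt_asymm (hp q hqU (Ne.symm hpq)) (hq p hpU hpq)
  have subset_minimizers : {p : X | ∀ᶠ x in 𝓝[≠] p, h p < h x} ⊆ ⋃ U ∈ B, minimizers U := by
    intro p hp
    obtain ⟨U, hUB, hpU, hU⟩ := (TopologicalSpace.isBasis_countableBasis X).mem_nhds_iff.1
      (eventually_nhdsWithin_iff.1 hp)
    exact mem_biUnion hUB ⟨hpU, hU⟩
  refine Countable.mono subset_minimizers ?_
  exact (TopologicalSpace.countable_countableBasis X).biUnion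
    fun U _ => (subsingleton_minimizers U).countable

section LastPassage

variable {X : Type*} [ConditionallyCompleteLinearOrder X] [DenselyOrdered X] [TopologicalSpace X]
  [OrderTopology X] {a b : X}

theorem exists_eq_forall_Ioc_lt {Y : Type*} [LinearOrder Y] [TopologicalSpace Y]
    [OrderClosedTopology Y] {h : X → Y} {y : Y} (hab : a ≤ b) (hh : ContinuousOn h (Icc a b))
    (hy : y ∈ Ico (h a) (h b)) : ∃ p ∈ Ico a b, h p = y ∧ ∀ x ∈ Ioc p b, y < h x := by
  have hcompact : IsCompact (Icc a b ∩ h ⁻¹' {y}) :=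
    isCompact_Icc.of_isClosed_subset
      (hh.preimage_isClosed_of_isClosed isClosed_Icc isClosed_singleton) inter_subset_left
  have hnonempty : (Icc a b ∩ h ⁻¹' {y}).Nonempty :=
    intermediate_value_Icc hab hh (Ico_subset_Icc_self hy)
  obtain ⟨p, ⟨⟨hap, hpb⟩, rfl⟩, hlast⟩ := hcompact.exists_isGreatest hnonempty
  refine ⟨p, ⟨hap, hpb.lt_of_ne fun hpb => hy.2.ne (congrArg h hpb)⟩, rfl, ?_⟩
  rintro x ⟨hpx, hxb⟩
  by_contra! hle
  have hsub : Icc x b ⊆ Icc a b := Icc_subset_Icc_left (hap.trans hpx.le)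
  obtain ⟨z, hz, hzp⟩ := intermediate_value_Icc hxb (hh.mono hsub) ⟨hle, hy.2.le⟩
  exact (hpx.trans_le hz.1).not_ge (hlast ⟨hsub hz, hzp⟩)

theorem le_of_countable_of_eventually_gt_imp_eventually_lt [SecondCountableTopology X]
    {h : X → ℝ} {E : Set X} (hab : a ≤ b) (hh : ContinuousOn h (Icc a b)) (hE : E.Countable)
    (hmin : ∀ p ∈ Ioo a b \ E, (∀ᶠ x in 𝓝[>] p, h p < h x) → ∀ᶠ x in 𝓝[<] p, h p < h x) :
    h b ≤ h a := by
  have hvalues : Ioo (h a) (h b) ⊆ h '' ({p | ∀ᶠ x in 𝓝[≠] p, h p < h x} ∪ E) := by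
    intro y hy
    obtain ⟨p, ⟨hap, hpb⟩, rfl, hlast⟩ :=
      exists_eq_forall_Ioc_lt hab hh (Ioo_subset_Ico_self hy)
    refine mem_image_of_mem h (or_iff_not_imp_right.2 fun hpE => ?_)
    have hap : a < p := hap.lt_of_ne fun hap => hy.1.ne (congrArg h hap)
    have hright : ∀ᶠ x in 𝓝[>] p, h p < h x := mem_of_superset (Ioc_mem_nhdsGT hpb) hlast
    have hleft : ∀ᶠ x in 𝓝[<] p, h p < h x := hmin p ⟨⟨hap, hpb⟩, hpE⟩ hright
    rw [mem_ofPred_eq, ← Iio_union_Ioi, nhdsWithin_union, eventually_sup]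
    exact ⟨hleft, hright⟩
  have hcountable := ((countable_setOf_strictLocalMin h).union hE).image h
  exact Cardinal.Real.Ioo_countable_iff.1 (hcountable.mono hvalues)

end LastPassage

section SpecularSlope

open Real

theorem specA_tan_tan {x y : ℝ} (hx : x ∈ Ioo (-(π / 2)) (π / 2))
    (hy : y ∈ Ioo (-(π / 2)) (π / 2)) : specA (tan x) (tan y) = tan ((x + y) / 2) := by
  obtain ⟨u, hxy⟩ : ∃ u, x + y = 2 * u := ⟨(x + y) / 2, by ring⟩
  rw [hxy, mul_div_cancel_left₀ u two_ne_zero]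
  have hcosx : 0 < cos x := cos_pos_of_mem_Ioo hx
  have hcosy : 0 < cos y := cos_pos_of_mem_Ioo hy
  have hcosu : 0 < cos u :=
    cos_pos_of_mem_Ioo ⟨by linarith [hx.1, hy.1], by linarith [hx.2, hy.2]⟩
  have hsum : tan x + tan y = 2 * sin u * cos u / (cos x * cos y) := by
    rw [← sin_two_mul, ← hxy, sin_add, tan_eq_sin_div_cos, tan_eq_sin_div_cos]
    field_simp
  have hsqrt : √((tan x ^ 2 + 1) * (tan y ^ 2 + 1)) = 1 / (cos x * cos y) := by
    rw [add_comm _ 1, add_comm _ 1, sqrt_mul (by positivity), one_div, mul_inv,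
      ← inv_sqrt_one_add_tan_sq hcosx, ← inv_sqrt_one_add_tan_sq hcosy, inv_inv, inv_inv]
  have hnum : tan x * tan y - 1 + √((tan x ^ 2 + 1) * (tan y ^ 2 + 1)) =
      2 * sin u ^ 2 / (cos x * cos y) := by
    have hcos : cos x * cos y - sin x * sin y = 1 - 2 * sin u ^ 2 := by
      rw [← cos_add, hxy, cos_two_mul, cos_sq']
      ring
    rw [hsqrt, tan_eq_sin_div_cos, tan_eq_sin_div_cos]
    field_simp
    linarith
  rw [specA, hnum, hsum, tan_eq_sin_div_cos]
  rcases eq_or_ne (sin u) 0 with hsinu | hsinu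
  · simp [hsinu]
  · rw [if_neg (by positivity)]
    field_simp

theorem specA_eq_tan (α β : ℝ) : specA α β = tan ((arctan α + arctan β) / 2) := by
  simpa only [tan_arctan] using specA_tan_tan (arctan_mem_Ioo α) (arctan_mem_Ioo β)

theorem le_specA {c α β : ℝ} (hα : c ≤ α) (hβ : c ≤ β) : c ≤ specA α β := by
  have hmean : arctan c ≤ (arctan α + arctan β) / 2 := by
    linarith [arctan_mono hα, arctan_mono hβ]
  have hlt : (arctan α + arctan β) / 2 < π / 2 := by
    linarith [arctan_lt_pi_div_two α, arctan_lt_pi_div_two β]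
  have hgt := neg_pi_div_two_lt_arctan c
  calc
    c = tan (arctan c) := (tan_arctan c).symm
    _ ≤ tan ((arctan α + arctan β) / 2) :=
      strictMonoOn_tan.monotoneOn ⟨hgt, hmean.trans_lt hlt⟩ ⟨hgt.trans_le hmean, hlt⟩ hmean
    _ = specA α β := (specA_eq_tan α β).symm

theorem specA_neg (α β : ℝ) : specA (-α) (-β) = -specA α β := by
  rw [specA_eq_tan, specA_eq_tan, arctan_neg, arctan_neg, ← tan_neg]
  congr 1
  ring

end SpecularSlope

section SpecularDerivative

variable {f : ℝ → ℝ} {x₀ L α β d : ℝ}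

theorem HasSpecData.eq_of_continuousAt (h : HasSpecData f x₀ L α β) (hf : ContinuousAt f x₀) :
    L = f x₀ :=
  tendsto_nhds_unique h.1 (hf.tendsto.mono_left nhdsWithin_le_nhds)

theorem HasSpecData.neg (h : HasSpecData f x₀ L α β) : HasSpecData (-f) x₀ (-L) (-α) (-β) := by
  obtain ⟨hleft, hright, hα, hβ⟩ := h
  have hquot : (fun x => ((-f) x - -L) / (x - x₀)) = fun x => -((f x - L) / (x - x₀)) := by
    funext x
    rw [Pi.neg_apply]
    ring
  exact ⟨hleft.neg, hright.neg, hquot ▸ hα.neg, hquot ▸ hβ.neg⟩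

theorem HasSpecDerivAt.neg (h : HasSpecDerivAt f x₀ d) : HasSpecDerivAt (-f) x₀ (-d) := by
  obtain ⟨L, α, β, hdata, rfl⟩ := h
  exact ⟨-L, -α, -β, hdata.neg, (specA_neg α β).symm⟩

theorem HasSpecDerivAt.eventually_left_lt_of_eventually_right_le {c : ℝ}
    (h : HasSpecDerivAt f x₀ d) (hf : ContinuousAt f x₀) (hdc : d < c)
    (hright : ∀ᶠ x in 𝓝[>] x₀, f x₀ - c * x₀ ≤ f x - c * x) :
    ∀ᶠ x in 𝓝[<] x₀, f x₀ - c * x₀ < f x - c * x := by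
  obtain ⟨L, α, β, hdata, rfl⟩ := h
  obtain rfl := hdata.eq_of_continuousAt hf
  obtain ⟨-, -, hα, hβ⟩ := hdata
  have hcα : c ≤ α := by
    refine ge_of_tendsto hα ?_
    filter_upwards [hright, self_mem_nhdsWithin] with x hx hx₀
    rw [le_div_iff₀ (sub_pos.2 hx₀)]
    linarith
  have hβc : β < c := lt_of_not_ge fun hcβ => (le_specA hcα hcβ).not_gt hdc
  filter_upwards [hβ.eventually_lt_const hβc, self_mem_nhdsWithin] with x hx hx₀
  rw [div_lt_iff_of_neg (sub_neg.2 hx₀)] at hx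
  linarith

theorem image_sub_le_mul_sub_of_specDeriv_le {a b M : ℝ} {E : Set ℝ} (hab : a ≤ b)
    (hf : ContinuousOn f (Icc a b)) (hE : E.Countable)
    (hspec : ∀ x ∈ Ioo a b \ E, ∃ d, HasSpecDerivAt f x d ∧ d ≤ M) :
    f b - f a ≤ M * (b - a) := by
  have hslope : ∀ c, M < c → f b - f a ≤ c * (b - a) := by
    intro c hMc
    have hdecr : f b - c * b ≤ f a - c * a := by
      refine le_of_countable_of_eventually_gt_imp_eventually_lt (h := fun x => f x - c * x) hab
        (hf.sub (by fun_prop)) hE fun p hp hright => ?_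
      obtain ⟨d, hd, hdM⟩ := hspec p hp
      exact hd.eventually_left_lt_of_eventually_right_le
        (hf.continuousAt (Icc_mem_nhds hp.1.1 hp.1.2)) (hdM.trans_lt hMc)
        (hright.mono fun _ => le_of_lt)
    linarith
  rcases hab.eq_or_lt with rfl | hab
  · simp
  · rw [← div_le_iff₀ (sub_pos.2 hab)]
    exact le_of_forall_gt_imp_ge_of_dense fun c hMc =>
      (div_le_iff₀ (sub_pos.2 hab)).2 (hslope c hMc)

theorem abs_image_sub_le_mul_sub_of_abs_specDeriv_le {a b M : ℝ} {E : Set ℝ} (hab : a ≤ b)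
    (hf : ContinuousOn f (Icc a b)) (hE : E.Countable)
    (hspec : ∀ x ∈ Ioo a b \ E, ∃ d, HasSpecDerivAt f x d ∧ |d| ≤ M) :
    |f b - f a| ≤ M * (b - a) := by
  refine abs_le'.2 ⟨image_sub_le_mul_sub_of_specDeriv_le hab hf hE fun x hx => ?_, ?_⟩
  · obtain ⟨d, hd, hdM⟩ := hspec x hx
    exact ⟨d, hd, (le_abs_self d).trans hdM⟩
  · have hneg : (-f) b - (-f) a ≤ M * (b - a) :=
      image_sub_le_mul_sub_of_specDeriv_le hab hf.neg hE fun x hx => by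
        obtain ⟨d, hd, hdM⟩ := hspec x hx
        exact ⟨-d, hd.neg, (neg_le_abs d).trans hdM⟩
    simp only [Pi.neg_apply] at hneg
    linarith

theorem lipschitz_of_bounded_specular_deriv_general {s E : Set ℝ} {M : ℝ} (hs : s.OrdConnected)
    (hf : ContinuousOn f s) (hE : E.Countable)
    (hspec : ∀ x ∈ interior s \ E, ∃ d, HasSpecDerivAt f x d ∧ |d| ≤ M) :
    ∀ x₁ ∈ s, ∀ x₂ ∈ s, |f x₁ - f x₂| ≤ M * |x₁ - x₂| := by
  intro x₁ hx₁ x₂ hx₂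
  wlog hle : x₂ ≤ x₁ generalizing x₁ x₂
  · rw [abs_sub_comm, abs_sub_comm x₁]
    exact this x₂ hx₂ x₁ hx₁ (le_of_not_ge hle)
  have hsub : Icc x₂ x₁ ⊆ s := hs.out hx₂ hx₁
  have hint : Ioo x₂ x₁ ⊆ interior s :=
    interior_maximal (Ioo_subset_Icc_self.trans hsub) isOpen_Ioo
  rw [abs_of_nonneg (sub_nonneg.2 hle)]
  exact abs_image_sub_le_mul_sub_of_abs_specDeriv_le hle (hf.mono hsub) hE
    fun x hx => hspec x ⟨hint hx.1, hx.2⟩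

end SpecularDerivative

theorem lipschitz_of_bounded_specular_deriv (f : ℝ → ℝ) (a b M : ℝ) (hM : 0 < M)
    (hcont : ContinuousOn f (Set.Ioo a b))
    (hspec : ∀ x ∈ Set.Ioo a b, ∃ d, HasSpecDerivAt f x d ∧ |d| ≤ M) :
    ∀ x₁ ∈ Set.Ioo a b, ∀ x₂ ∈ Set.Ioo a b, |f x₁ - f x₂| ≤ M * |x₁ - x₂| :=
  lipschitz_of_bounded_specular_deriv_general ordConnected_Ioo hcont countable_empty
    fun x hx => hspec x (interior_subset hx.1)
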